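/- arXiv:1302.3927 — 2 statements merged into one kernel-verified Lean document; each statement's English description precedes it below -/
import Mathlib

section
/- Let M be a von Neumann algebra with no central summands of type I₁. If Φ : M → M is a nonlinear derivation, then Φ is an additive derivation; in particular Φ(T + S) = Φ(T) + Φ(S) for all T, S ∈ M. -/
variable {H : Type*} [NormedAddCommGroup H] [InnerProductSpace ℂ H] [CompleteSpace H]

/-- `P` is a projection (self-adjoint idempotent) belonging to the
von Neumann algebra `M`. -/
def VNProjection (M : VonNeumannAlgebra H) (P : H →L[ℂ] H) : Prop :=
  P ∈ M ∧ IsSelfAdjoint P ∧ P * P = P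

/-- `Z` is a central projection of `M`: a projection in `M` commuting with every
element of `M`. -/
def VNCentralProjection (M : VonNeumannAlgebra H) (Z : H →L[ℂ] H) : Prop :=
  VNProjection M Z ∧ ∀ T ∈ M, Z * T = T * Z

/-- `P` is core-free: the only central projection `Q` of `M` with `Q ≤ P` is `0`. -/
def VNCoreFree (M : VonNeumannAlgebra H) (P : H →L[ℂ] H) : Prop :=
  ∀ Q, VNCentralProjection M Q → Q * P = Q → Q = 0

/-- `Z` is the central carrier of `A`: the smallest central projection of `M`
with `Z * A = A`. -/
def VNCentralCarrier (M : VonNeumannAlgebra H) (A Z : H →L[ℂ] H) : Prop :=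
  VNCentralProjection M Z ∧ Z * A = A ∧
    ∀ Q, VNCentralProjection M Q → Q * A = A → Z * Q = Z

/-- `M` has no central summands of type I₁: for every nonzero central projection `Z`
there are `A, B ∈ M` with `Z * (A * B - B * A) ≠ 0`. -/
def VNNoTypeI1 (M : VonNeumannAlgebra H) : Prop :=
  ∀ Z, VNCentralProjection M Z → Z ≠ 0 → ∃ A ∈ M, ∃ B ∈ M, Z * (A * B - B * A) ≠ 0

/-!
The defect `D(x, y) = Φ(x + y) - Φ(x) - Φ(y)` satisfies `a D(x, y) = D(ax, ay)` and
`D(x, y) a = D(xa, ya)`. If `e` is idempotent and `u`, `v` lie in `eM(1 - e)`, then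
`u + v = (e + u)((1 - e) + v)`, and the Leibniz rule applied to this product gives `D(u, v) = 0`.
Hence defects commute with idempotents. Subtracting half the norm of a self-adjoint `X` times the
difference of its positive and negative spectral projections halves the norm, so by Riesz's lemma
a von Neumann algebra is the norm-closed span of its projections, and defects commute with all of
it. Then `ab D(x, y) = ba D(x, y)`, so the range of a defect lies in the joint kernel of the
commutators, which is trivial in the absence of a type I₁ summand.
-/

section NonlinearDerivation

variable {R S : Type*} [Ring R] [Ring S]

/-- A nonlinear derivation `d : R → S`: a map satisfying the Leibniz rule, with no additivity
assumed. The values may lie in a larger ring `S`, regarded as an `R`-bimodule along `ι`. -/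
def IsNonlinearDerivation (ι : R →+* S) (d : R → S) : Prop :=
  ∀ a b, d (a * b) = d a * ι b + ι a * d b

/-- The failure of `d` to be additive at `(x, y)`. -/
def additivityDefect (d : R → S) (x y : R) : S :=
  d (x + y) - d x - d y

namespace IsNonlinearDerivation

variable {ι : R →+* S} {d : R → S}

theorem map_zero (hd : IsNonlinearDerivation ι d) : d 0 = 0 := by
  simpa using hd 0 0

theorem mul_additivityDefect (hd : IsNonlinearDerivation ι d) (a x y : R) :
    ι a * additivityDefect d x y = additivityDefect d (a * x) (a * y) := by
  simp only [additivityDefect, ← mul_add, hd a, map_add]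
  noncomm_ring

theorem additivityDefect_mul (hd : IsNonlinearDerivation ι d) (x y a : R) :
    additivityDefect d x y * ι a = additivityDefect d (x * a) (y * a) := by
  simp only [additivityDefect, ← add_mul, hd _ a, map_add]
  noncomm_ring

theorem additivityDefect_zero_left (hd : IsNonlinearDerivation ι d) (x : R) :
    additivityDefect d 0 x = 0 := by
  simp [additivityDefect, hd.map_zero]

theorem additivityDefect_zero_right (hd : IsNonlinearDerivation ι d) (x : R) :
    additivityDefect d x 0 = 0 := by
  simp [additivityDefect, hd.map_zero]

theorem map_add_mul_add (hd : IsNonlinearDerivation ι d) (a b x y : R) :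
    d ((a + b) * (x + y)) = d (a * x) + d (a * y) + d (b * x) + d (b * y) +
      additivityDefect d a b * ι (x + y) + ι (a + b) * additivityDefect d x y := by
  simp only [additivityDefect, hd _ _, map_add]
  noncomm_ring

-- Under these relations `(e + u) * (f + v) = u + v`, a sum written as a product.
theorem additivityDefect_eq_zero_of_mul_eq (hd : IsNonlinearDerivation ι d) {e f u v : R}
    (hef : e * f = 0) (hev : e * v = v) (huf : u * f = u) (huv : u * v = 0) :
    additivityDefect d u v = 0 := by
  have hleft : additivityDefect d e u * ι (f + v) = 0 := by
    rw [map_add, mul_add, hd.additivityDefect_mul, hd.additivityDefect_mul, hef, huf, hev, huv,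
      hd.additivityDefect_zero_left, hd.additivityDefect_zero_right, add_zero]
  have hright : ι (e + u) * additivityDefect d f v = 0 := by
    rw [map_add, add_mul, hd.mul_additivityDefect, hd.mul_additivityDefect, hef, hev, huf, huv,
      hd.additivityDefect_zero_left, hd.additivityDefect_zero_right, add_zero]
  have hprod : (e + u) * (f + v) = u + v := by
    rw [add_mul, mul_add, mul_add, hef, hev, huf, huv, zero_add, add_zero, add_comm]
  have hsum := hd.map_add_mul_add e u f v
  rw [hprod, hleft, hright, hef, hev, huf, huv, hd.map_zero] at hsum
  rw [additivityDefect, hsum]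
  abel

theorem mul_additivityDefect_mul_one_sub (hd : IsNonlinearDerivation ι d) {e : R}
    (he : IsIdempotentElem e) (x y : R) :
    ι e * additivityDefect d x y * ι (1 - e) = 0 := by
  rw [hd.mul_additivityDefect, hd.additivityDefect_mul]
  refine hd.additivityDefect_eq_zero_of_mul_eq (e := e) (f := 1 - e) he.mul_one_sub_self ?_ ?_ ?_
  · rw [← mul_assoc, ← mul_assoc, he.eq]
  · rw [mul_assoc, he.one_sub.eq]
  · rw [mul_assoc e y, ← mul_assoc _ e, mul_assoc _ _ e, he.one_sub_mul_self, mul_zero, zero_mul]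

theorem commute_additivityDefect_of_isIdempotentElem (hd : IsNonlinearDerivation ι d) {e : R}
    (he : IsIdempotentElem e) (x y : R) : Commute (ι e) (additivityDefect d x y) := by
  have hright := hd.mul_additivityDefect_mul_one_sub he x y
  have hleft := hd.mul_additivityDefect_mul_one_sub he.one_sub x y
  rw [map_sub, map_one, mul_sub, mul_one, sub_eq_zero] at hright
  rw [sub_sub_cancel, map_sub, map_one, sub_mul, sub_mul, one_mul, sub_eq_zero] at hleft
  exact hright.trans hleft.symm

-- A left multiple of a defect is again a defect, so it commutes with `ι a` as well.
theorem commutator_mul_additivityDefect (hd : IsNonlinearDerivation ι d)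
    (hcomm : ∀ a x y, Commute (ι a) (additivityDefect d x y)) (a b x y : R) :
    ι (a * b - b * a) * additivityDefect d x y = 0 := by
  suffices ι a * (ι b * additivityDefect d x y) = ι b * (ι a * additivityDefect d x y) by
    rw [map_sub, map_mul, map_mul, sub_mul, mul_assoc, mul_assoc, this, sub_self]
  calc ι a * (ι b * additivityDefect d x y)
      = ι b * additivityDefect d x y * ι a := by
        rw [hd.mul_additivityDefect]
        exact hcomm a _ _
    _ = ι b * (ι a * additivityDefect d x y) := by rw [mul_assoc, (hcomm a x y).eq]

end IsNonlinearDerivation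

end NonlinearDerivation

theorem le_of_forall_exists_norm_sub_le {E : Type*} [NormedAddCommGroup E] [NormedSpace ℝ E]
    {V F : Submodule ℝ E} (hF : IsClosed (F : Set E)) {c : ℝ} (hc : c < 1)
    (h : ∀ x ∈ V, ∃ y ∈ V ⊓ F, ‖x - y‖ ≤ c * ‖x‖) : V ≤ F := by
  have hclosed : IsClosed (F.comap V.subtype : Set V) := hF.preimage continuous_subtype_val
  by_contra hVF
  obtain ⟨v, hv, hvF⟩ := SetLike.not_le_iff_exists.1 hVF
  obtain ⟨r, hcr, hr⟩ := exists_between hc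
  obtain ⟨x, hxF, hx⟩ := riesz_lemma hclosed ⟨⟨v, hv⟩, hvF⟩ hr
  obtain ⟨y, hy, hxy⟩ := h x x.2
  have hle : r * ‖x‖ ≤ c * ‖x‖ := (hx ⟨y, hy.1⟩ hy.2).trans hxy
  have hpos : 0 < ‖x‖ := norm_pos_iff.2 fun h0 => hxF (h0 ▸ zero_mem _)
  exact hcr.not_ge (le_of_mul_le_mul_right hle hpos)

section CStarAlgebra

variable {A : Type*} [CStarAlgebra A] [PartialOrder A] [StarOrderedRing A]

theorem norm_le_of_neg_algebraMap_le_of_le_algebraMap {a : A} (ha : IsSelfAdjoint a)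
    {r : ℝ} (hr : 0 ≤ r) (hl : -algebraMap ℝ A r ≤ a) (hu : a ≤ algebraMap ℝ A r) : ‖a‖ ≤ r := by
  rw [← map_neg, algebraMap_le_iff_le_spectrum] at hl
  rw [le_algebraMap_iff_spectrum_le] at hu
  cases subsingleton_or_nontrivial A
  · rwa [norm_of_subsingleton]
  · rcases CStarAlgebra.norm_or_neg_norm_mem_spectrum ha with h | h
    · exact hu _ h
    · exact neg_le_neg_iff.1 (hl _ h)

theorem le_smul_of_mul_eq_self {a p : A} (hp : IsStarProjection p) (ha : IsSelfAdjoint a)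
    (hpa : p * a = a) {r : ℝ} (har : a ≤ algebraMap ℝ A r) : a ≤ r • p := by
  have hap : a * p = a := by
    simpa only [star_mul, hp.isSelfAdjoint.star_eq, ha.star_eq] using congrArg star hpa
  calc a = p * a * p := by rw [hpa, hap]
    _ ≤ p * algebraMap ℝ A r * p := hp.isSelfAdjoint.conjugate_le_conjugate har
    _ = r • p := by
        rw [Algebra.algebraMap_eq_smul_one, mul_smul_comm, mul_one, smul_mul_assoc,
          hp.isIdempotentElem.eq]

end CStarAlgebra

theorem vnProjection_starProjection {M : VonNeumannAlgebra H} {K : Submodule ℂ H}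
    [K.HasOrthogonalProjection] (hK : ∀ S ∈ M.commutant, ∀ x ∈ K, S x ∈ K) :
    VNProjection M K.starProjection := by
  have hproj : IsStarProjection K.starProjection := isStarProjection_starProjection
  refine ⟨(VonNeumannAlgebra.IsStarProjection.mem_iff hproj M).2 fun S hS => ?_,
    hproj.isSelfAdjoint, hproj.isIdempotentElem⟩
  rw [K.range_starProjection]
  exact hK S hS

theorem VNProjection.isStarProjection {M : VonNeumannAlgebra H} {P : H →L[ℂ] H}
    (hP : VNProjection M P) : IsStarProjection P := ⟨hP.2.2, hP.2.1⟩

theorem exists_vnProjection_mul_posPart {M : VonNeumannAlgebra H} {X : H →L[ℂ] H} (hX : X ∈ M) :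
    ∃ P, VNProjection M P ∧ P * X⁺ = X⁺ ∧ P * X⁻ = 0 := by
  let K : Submodule ℂ H := (X⁻).ker
  have hK : VNProjection M K.starProjection := by
    refine vnProjection_starProjection fun S hS x hx => ?_
    have hcomm : Commute X⁻ S :=
      Commute.cfcₙ_real (VonNeumannAlgebra.mem_commutant_iff.1 hS X hX) _
    have hx' : X⁻ x = 0 := hx
    change (X⁻ * S) x = 0
    rw [hcomm.eq, mul_apply_eq_comp, hx', map_zero]
  refine ⟨K.starProjection, hK, ?_, ?_⟩
  · ext x
    exact Submodule.starProjection_eq_self_iff.2 congr($(CFC.negPart_mul_posPart X) x)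
  · have h : X⁻ * K.starProjection = 0 := by
      ext x
      exact K.starProjection_apply_mem x
    simpa only [star_mul, star_zero, hK.2.1.star_eq,
      (IsSelfAdjoint.of_nonneg (CFC.negPart_nonneg X)).star_eq] using congrArg star h

theorem exists_vnProjection_smul_le_le_smul {M : VonNeumannAlgebra H} {X : H →L[ℂ] H}
    (hX : X ∈ M) (hsa : IsSelfAdjoint X) :
    ∃ P, VNProjection M P ∧ -(‖X‖ • (1 - P)) ≤ X ∧ X ≤ ‖X‖ • P := by
  obtain ⟨P, hP, hpos, hneg⟩ := exists_vnProjection_mul_posPart hX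
  have hpos_nonneg := CFC.posPart_nonneg X
  have hneg_nonneg := CFC.negPart_nonneg X
  have hpos_le : X⁺ ≤ ‖X‖ • P :=
    le_smul_of_mul_eq_self hP.isStarProjection (.of_nonneg hpos_nonneg) hpos <|
      (CStarAlgebra.norm_le_iff_le_algebraMap _ (norm_nonneg X)).1 (CStarAlgebra.norm_posPart_le X)
  have hneg_le : X⁻ ≤ ‖X‖ • (1 - P) :=
    le_smul_of_mul_eq_self hP.isStarProjection.one_sub (.of_nonneg hneg_nonneg)
      (by rw [sub_mul, one_mul, hneg, sub_zero]) <|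
      (CStarAlgebra.norm_le_iff_le_algebraMap _ (norm_nonneg X)).1 (CStarAlgebra.norm_negPart_le X)
  exact ⟨P, hP, (neg_le_neg hneg_le).trans (CFC.neg_negPart_le hsa),
    (CFC.le_posPart hsa).trans hpos_le⟩

theorem exists_vnProjection_norm_sub_le {M : VonNeumannAlgebra H} {X : H →L[ℂ] H} (hX : X ∈ M)
    (hsa : IsSelfAdjoint X) :
    ∃ P, VNProjection M P ∧ ‖X - (‖X‖ / 2) • (P - (1 - P))‖ ≤ ‖X‖ / 2 := by
  obtain ⟨P, hP, hl, hu⟩ := exists_vnProjection_smul_le_le_smul hX hsa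
  have hsa' : IsSelfAdjoint (X - (‖X‖ / 2) • (P - (1 - P))) :=
    hsa.sub (.smul (.all _) (hP.2.1.sub ((IsSelfAdjoint.one _).sub hP.2.1)))
  refine ⟨P, hP, norm_le_of_neg_algebraMap_le_of_le_algebraMap hsa' (by positivity) ?_ ?_⟩
  · rw [Algebra.algebraMap_eq_smul_one, le_sub_iff_add_le]
    convert hl using 1
    module
  · rw [Algebra.algebraMap_eq_smul_one, sub_le_iff_le_add]
    convert hu using 1
    module

theorem vnProjection_one (M : VonNeumannAlgebra H) : VNProjection M 1 :=
  ⟨one_mem M, .one _, one_mul 1⟩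

theorem mem_closure_span_vnProjection_of_isSelfAdjoint {M : VonNeumannAlgebra H}
    {X : H →L[ℂ] H} (hX : X ∈ M) (hsa : IsSelfAdjoint X) :
    X ∈ (Submodule.span ℂ {P | VNProjection M P}).topologicalClosure := by
  let F := (Submodule.span ℂ {P | VNProjection M P}).topologicalClosure
  let V : Submodule ℝ (H →L[ℂ] H) :=
    selfAdjoint.submodule ℝ (H →L[ℂ] H) ⊓ M.toStarSubalgebra.toSubmodule.restrictScalars ℝ
  have hP_mem : ∀ P, VNProjection M P → P ∈ V ⊓ F.restrictScalars ℝ := fun P hP =>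
    ⟨⟨hP.2.1, hP.1⟩, Submodule.le_topologicalClosure _ (Submodule.subset_span hP)⟩
  suffices V ≤ F.restrictScalars ℝ from this ⟨hsa, hX⟩
  refine le_of_forall_exists_norm_sub_le (c := 1 / 2) (Submodule.isClosed_topologicalClosure _)
    (by norm_num) fun Y ⟨hYsa, hYM⟩ => ?_
  obtain ⟨P, hP, hle⟩ := exists_vnProjection_norm_sub_le hYM hYsa
  refine ⟨_, Submodule.smul_mem _ _ (sub_mem (hP_mem P hP)
    (sub_mem (hP_mem 1 (vnProjection_one M)) (hP_mem P hP))), hle.trans_eq (by ring)⟩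

theorem mem_closure_span_vnProjection {M : VonNeumannAlgebra H} {T : H →L[ℂ] H} (hT : T ∈ M) :
    T ∈ (Submodule.span ℂ {P | VNProjection M P}).topologicalClosure := by
  have hsmul : ∀ {X}, X ∈ M → ∀ c : ℂ, c • X ∈ M := M.toStarSubalgebra.smul_mem
  have hre : (realPart T : H →L[ℂ] H) ∈ M := by
    rw [realPart_apply_coe, ← Complex.coe_smul]
    exact hsmul (add_mem hT (star_mem hT)) _
  have him : (imaginaryPart T : H →L[ℂ] H) ∈ M := by
    rw [imaginaryPart_apply_coe, ← Complex.coe_smul]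
    exact hsmul (hsmul (sub_mem hT (star_mem hT)) _) _
  rw [← realPart_add_I_smul_imaginaryPart T]
  exact add_mem (mem_closure_span_vnProjection_of_isSelfAdjoint hre (realPart T).2)
    (Submodule.smul_mem _ _
      (mem_closure_span_vnProjection_of_isSelfAdjoint him (imaginaryPart T).2))

theorem commute_of_forall_commute_vnProjection {M : VonNeumannAlgebra H} {B T : H →L[ℂ] H}
    (hB : ∀ P, VNProjection M P → Commute P B) (hT : T ∈ M) : Commute T B := by
  let C : Submodule ℂ (H →L[ℂ] H) := (Subalgebra.centralizer ℂ {B}).toSubmodule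
  have hC : ∀ {X}, X ∈ C ↔ Commute B X := by
    simp only [C, Subalgebra.mem_toSubmodule, Subalgebra.mem_centralizer_iff,
      Set.mem_singleton_iff, forall_eq, commute_iff_eq, implies_true]
  have hclosed : IsClosed (C : Set (H →L[ℂ] H)) := Set.isClosed_centralizer _
  have hspan : Submodule.span ℂ {P | VNProjection M P} ≤ C :=
    Submodule.span_le.2 fun P hP => hC.2 (hB P hP).symm
  exact (hC.1 (Submodule.topologicalClosure_minimal _ hspan hclosed
    (mem_closure_span_vnProjection hT))).symm

theorem vnCentralProjection_starProjection {M : VonNeumannAlgebra H} {K : Submodule ℂ H}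
    [K.HasOrthogonalProjection] (hM : ∀ T ∈ M, ∀ x ∈ K, T x ∈ K)
    (hM' : ∀ S ∈ M.commutant, ∀ x ∈ K, S x ∈ K) :
    VNCentralProjection M K.starProjection := by
  have hcommutant : VNProjection M.commutant K.starProjection :=
    vnProjection_starProjection (by rwa [VonNeumannAlgebra.commutant_commutant])
  exact ⟨vnProjection_starProjection hM', fun T hT =>
    (VonNeumannAlgebra.mem_commutant_iff.1 hcommutant.1 T hT).symm⟩

/-- The joint kernel of the commutators of elements of `M`. The projection onto it is central and
cuts out the type I₁ summand of `M`. -/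
def commutatorKernel (M : VonNeumannAlgebra H) : Submodule ℂ H :=
  ⨅ A ∈ M, ⨅ B ∈ M, (A * B - B * A).ker

theorem mem_commutatorKernel {M : VonNeumannAlgebra H} {x : H} :
    x ∈ commutatorKernel M ↔ ∀ A ∈ M, ∀ B ∈ M, (A * B - B * A) x = 0 := by
  simp [commutatorKernel]

instance (M : VonNeumannAlgebra H) : (commutatorKernel M).HasOrthogonalProjection := by
  have hclosed : IsClosed (commutatorKernel M : Set H) := by
    simp only [commutatorKernel, Submodule.coe_iInf]
    exact isClosed_iInter fun A => isClosed_iInter fun _ => isClosed_iInter fun B =>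
      isClosed_iInter fun _ => (A * B - B * A).isClosed_ker
  have := hclosed.completeSpace_coe
  infer_instance

theorem apply_mem_commutatorKernel {M : VonNeumannAlgebra H} {T : H →L[ℂ] H} (hT : T ∈ M)
    {x : H} (hx : x ∈ commutatorKernel M) : T x ∈ commutatorKernel M := by
  rw [mem_commutatorKernel] at hx ⊢
  intro A hA B hB
  have hcomm : (A * B - B * A) * T = (A * (B * T) - B * T * A) - B * (A * T - T * A) := by
    noncomm_ring
  calc (A * B - B * A) (T x) = (A * (B * T) - B * T * A) x - B ((A * T - T * A) x) :=
        congr($hcomm x)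
    _ = 0 := by rw [hx A hA _ (mul_mem hB hT), hx A hA T hT, map_zero, sub_zero]

theorem commutant_apply_mem_commutatorKernel {M : VonNeumannAlgebra H} {S : H →L[ℂ] H}
    (hS : S ∈ M.commutant) {x : H} (hx : x ∈ commutatorKernel M) :
    S x ∈ commutatorKernel M := by
  rw [mem_commutatorKernel] at hx ⊢
  intro A hA B hB
  have hcomm := VonNeumannAlgebra.mem_commutant_iff.1 hS (A * B - B * A)
    (sub_mem (mul_mem hA hB) (mul_mem hB hA))
  calc (A * B - B * A) (S x) = S ((A * B - B * A) x) := congr($hcomm x)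
    _ = 0 := by rw [hx A hA B hB, map_zero]

theorem VNNoTypeI1.commutatorKernel_eq_bot {M : VonNeumannAlgebra H} (hM : VNNoTypeI1 M) :
    commutatorKernel M = ⊥ := by
  let P := (commutatorKernel M).starProjection
  have hP : VNCentralProjection M P := vnCentralProjection_starProjection
    (fun _ hT _ => apply_mem_commutatorKernel hT)
    (fun _ hS _ => commutant_apply_mem_commutatorKernel hS)
  have hP_comm : ∀ A ∈ M, ∀ B ∈ M, P * (A * B - B * A) = 0 := by
    intro A hA B hB
    rw [hP.2 _ (sub_mem (mul_mem hA hB) (mul_mem hB hA))]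
    ext x
    exact mem_commutatorKernel.1 ((commutatorKernel M).starProjection_apply_mem x) A hA B hB
  have hP_zero : P = 0 := by
    by_contra hne
    obtain ⟨A, hA, B, hB, hAB⟩ := hM P hP hne
    exact hAB (hP_comm A hA B hB)
  rw [← (commutatorKernel M).range_starProjection]
  exact LinearMap.range_eq_bot.2 congr(($hP_zero : H →ₗ[ℂ] H))

theorem nonlinear_derivation_additive_general (M : VonNeumannAlgebra H)
    (hM : VNNoTypeI1 M) (Φ : (H →L[ℂ] H) → (H →L[ℂ] H))
    (hder : ∀ A ∈ M, ∀ B ∈ M, Φ (A * B) = Φ A * B + A * Φ B) :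
    ∀ T ∈ M, ∀ S ∈ M, Φ (T + S) = Φ T + Φ S := by
  intro T hT S hS
  let ι : M →+* (H →L[ℂ] H) := SubringClass.subtype M
  let d : M → (H →L[ℂ] H) := fun A => Φ A
  have hd : IsNonlinearDerivation ι d := fun A B => hder A A.2 B B.2
  have hcomm : ∀ A X Y, Commute (ι A) (additivityDefect d X Y) := fun A X Y =>
    commute_of_forall_commute_vnProjection (fun P hP =>
      hd.commute_additivityDefect_of_isIdempotentElem (e := ⟨P, hP.1⟩)
        (Subtype.ext hP.2.2) X Y) A.2
  have hdefect : additivityDefect d ⟨T, hT⟩ ⟨S, hS⟩ = 0 := by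
    ext x
    rw [zero_apply, ← Submodule.mem_bot ℂ, ← hM.commutatorKernel_eq_bot, mem_commutatorKernel]
    exact fun A hA B hB =>
      congr($(hd.commutator_mul_additivityDefect hcomm ⟨A, hA⟩ ⟨B, hB⟩ ⟨T, hT⟩ ⟨S, hS⟩) x)
  rwa [additivityDefect, sub_sub, sub_eq_zero] at hdefect

/-- **Theorem 1.1.** Every nonlinear derivation on a von Neumann algebra with no
central summands of type I₁ is an additive derivation. -/
theorem nonlinear_derivation_additive (M : VonNeumannAlgebra H)
    (hM : VNNoTypeI1 M)
    (Φ : (H →L[ℂ] H) → (H →L[ℂ] H))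
    (hmaps : ∀ T ∈ M, Φ T ∈ M)
    (hder : ∀ A ∈ M, ∀ B ∈ M, Φ (A * B) = Φ A * B + A * Φ B) :
    ∀ T ∈ M, ∀ S ∈ M, Φ (T + S) = Φ T + Φ S :=
  nonlinear_derivation_additive_general M hM Φ hder
end

section
/- If M is a von Neumann algebra with no central summands of type I₁, then M equals the two-sided ideal of M generated by all commutators AB − BA with A, B ∈ M. -/
/-!
If `e * x = x` and `x * e = 0` then `x` is the commutator of `e` and `x`, so the commutator ideal
contains every such `x`. Let `V` be a maximal partial isometry of square zero in `M`. Maximality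
leaves no nonzero element of square zero in the corner of `g = 1 - (V⋆ V + V V⋆)`, and a corner
without such elements is commutative. If `M` has no abelian central summand, then `g` is equivalent
to a subprojection of `1 - g`: otherwise a maximal partial isometry `W` from `1 - g` to `g` would
leave a part of `g` whose central carrier is dominated by the abelian projection `g`. Hence
`1 = V⋆ V + V V⋆ + W W⋆`, where `V` and `W` are commutators.
-/

variable {H : Type*} [NormedAddCommGroup H] [InnerProductSpace ℂ H] [CompleteSpace H]

section PartialIsometry

/-- Partial isometries of a ring with involution. In a C⋆-algebra the equation `v v⋆ v = v` says
that the initial projection `v⋆ v` and the final projection `v v⋆` really are projections. -/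
def IsPartialIsometry {R : Type*} [Mul R] [Star R] (v : R) : Prop :=
  v * star v * v = v

/-- Orthogonality of two operators in the sense that both their ranges and the ranges of their
adjoints are orthogonal; sums of pairwise orthogonal partial isometries are partial isometries. -/
def IsStarOrthogonal {R : Type*} [MulZeroClass R] [Star R] (v w : R) : Prop :=
  star v * w = 0 ∧ v * star w = 0

variable {R : Type*} [Ring R] [StarRing R] {v w V : R}

theorem IsPartialIsometry.zero : IsPartialIsometry (0 : R) := by
  simp [IsPartialIsometry]

theorem IsPartialIsometry.star (hv : IsPartialIsometry v) : IsPartialIsometry (star v) := by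
  simpa [IsPartialIsometry, mul_assoc] using congr(Star.star $hv)

theorem IsPartialIsometry.isStarProjection_star_mul_self (hv : IsPartialIsometry v) :
    IsStarProjection (Star.star v * v) where
  isIdempotentElem := by
    rw [IsIdempotentElem, mul_assoc, ← mul_assoc v, hv]
  isSelfAdjoint := .star_mul_self v

theorem IsPartialIsometry.isStarProjection_mul_star_self (hv : IsPartialIsometry v) :
    IsStarProjection (v * Star.star v) := by
  simpa using hv.star.isStarProjection_star_mul_self

theorem IsStarOrthogonal.symm (h : IsStarOrthogonal v w) : IsStarOrthogonal w v :=
  ⟨by simpa using congr(star $(h.1)), by simpa using congr(star $(h.2))⟩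

theorem IsStarOrthogonal.add_right {w' : R} (h : IsStarOrthogonal v w)
    (h' : IsStarOrthogonal v w') : IsStarOrthogonal v (w + w') :=
  ⟨by rw [mul_add, h.1, h'.1, add_zero], by rw [star_add, mul_add, h.2, h'.2, add_zero]⟩

theorem IsStarOrthogonal.mul_right {c d : R} (h : IsStarOrthogonal v w) (hw : w * c = d * w) :
    IsStarOrthogonal v (w * c) :=
  ⟨by rw [← mul_assoc, h.1, zero_mul], by rw [hw, star_mul, ← mul_assoc, h.2, zero_mul]⟩

theorem IsStarOrthogonal.sum_right {ι : Type*} {s : Finset ι} {f : ι → R}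
    (h : ∀ i ∈ s, IsStarOrthogonal v (f i)) : IsStarOrthogonal v (∑ i ∈ s, f i) :=
  Finset.sum_induction f (IsStarOrthogonal v) (fun _ _ ↦ .add_right) (by simp [IsStarOrthogonal]) h

theorem IsPartialIsometry.add (hv : IsPartialIsometry v) (hw : IsPartialIsometry w)
    (h : IsStarOrthogonal v w) : IsPartialIsometry (v + w) := by
  have hv' : v * Star.star v * v = v := hv
  have hw' : w * Star.star w * w = w := hw
  simp only [IsPartialIsometry, star_add, mul_add, add_mul, hv', hw', h.2, h.symm.2,
    add_zero, zero_add]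
  simp only [mul_assoc, h.1, h.symm.1, mul_zero, add_zero, zero_add]

theorem IsPartialIsometry.sum {ι : Type*} {f : ι → R} (hf : ∀ i, IsPartialIsometry (f i))
    (h : Pairwise fun i j ↦ IsStarOrthogonal (f i) (f j)) (s : Finset ι) :
    IsPartialIsometry (∑ i ∈ s, f i) := by
  classical
  induction s using Finset.induction_on with
  | empty => simpa using IsPartialIsometry.zero
  | insert i s hi ih =>
    rw [Finset.sum_insert hi]
    exact (hf i).add ih (.sum_right fun j hj ↦ h (ne_of_mem_of_not_mem hj hi).symm)

theorem IsPartialIsometry.eq_zero_of_isStarOrthogonal_self (hv : IsPartialIsometry v)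
    (h : IsStarOrthogonal v v) : v = 0 := by
  rw [← hv, h.2, zero_mul]

theorem IsPartialIsometry.norm_le_one {A : Type*} [NormedRing A] [StarRing A] [CStarRing A]
    {v : A} (hv : IsPartialIsometry v) : ‖v‖ ≤ 1 := by
  have h := hv.isStarProjection_star_mul_self.norm_le
  rw [CStarRing.norm_star_mul_self] at h
  nlinarith [norm_nonneg v]

theorem IsPartialIsometry.eq_mul_of_isStarOrthogonal_sub (hv : IsPartialIsometry v)
    (h : IsStarOrthogonal v (V - v)) : v = v * Star.star v * V := by
  have hV : Star.star v * V = Star.star v * v := by simpa [mul_sub, sub_eq_zero] using h.1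
  rw [mul_assoc, hV, ← mul_assoc, hv]

theorem IsPartialIsometry.eq_mul_of_isStarOrthogonal_sub' (hv : IsPartialIsometry v)
    (h : IsStarOrthogonal v (V - v)) : v = V * (Star.star v * v) := by
  simpa [mul_assoc] using congr(Star.star $(hv.star.eq_mul_of_isStarOrthogonal_sub
    (V := Star.star V) ⟨by simpa using h.2, by simpa using h.1⟩))

theorem IsPartialIsometry.isStarOrthogonal_of_sub (hv : IsPartialIsometry v)
    (h : IsStarOrthogonal v (V - v)) (hw : IsStarOrthogonal V w) : IsStarOrthogonal v w := by
  constructor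
  · rw [hv.eq_mul_of_isStarOrthogonal_sub' h, star_mul, mul_assoc, hw.1, mul_zero]
  · rw [hv.eq_mul_of_isStarOrthogonal_sub h, mul_assoc, hw.2, mul_zero]

theorem IsPartialIsometry.eq_zero_of_isStarOrthogonal_sub (hv : IsPartialIsometry v)
    (h : IsStarOrthogonal v (V - v)) (hV : IsStarOrthogonal V v) : v = 0 :=
  hv.eq_zero_of_isStarOrthogonal_self (hv.isStarOrthogonal_of_sub h hV)

end PartialIsometry

section Bicommutant

/-- `p` belongs to the bicommutant of `a`. For self-adjoint `a` these are the elements obtained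
from `a` by spectral theory, and they lie in every von Neumann algebra that contains `a`. -/
def InBicommutant {R : Type*} [Mul R] (p a : R) : Prop :=
  ∀ t, Commute a t → Commute p t

theorem mem_of_forall_commutant_commute {M : VonNeumannAlgebra H} {p : H →L[ℂ] H}
    (h : ∀ t ∈ M.commutant, Commute p t) : p ∈ M := by
  rw [← M.commutant_commutant, VonNeumannAlgebra.mem_commutant_iff]
  exact fun t ht ↦ (h t ht).symm

theorem commute_of_mem_of_mem_commutant {M : VonNeumannAlgebra H} {a t : H →L[ℂ] H} (ha : a ∈ M)
    (ht : t ∈ M.commutant) : Commute a t :=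
  VonNeumannAlgebra.mem_commutant_iff.mp ht a ha

theorem InBicommutant.mem {M : VonNeumannAlgebra H} {p a : H →L[ℂ] H} (hp : InBicommutant p a)
    (ha : a ∈ M) : p ∈ M :=
  mem_of_forall_commutant_commute fun t ht ↦ hp t (commute_of_mem_of_mem_commutant ha ht)

theorem commute_of_mul_mul_eq {R : Type*} [Semigroup R] [StarMul R] {p t : R}
    (hp : IsSelfAdjoint p) (ht : p * t * p = t * p) (ht' : p * star t * p = star t * p) :
    Commute p t := by
  have hpt : p * t * p = p * t := by simpa [mul_assoc, hp.star_eq] using congr(star $ht')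
  exact hpt.symm.trans ht

omit [CompleteSpace H] in
theorem starProjection_mul_eq_self {K : Submodule ℂ H} [K.HasOrthogonalProjection]
    {b : H →L[ℂ] H} (h : ∀ x, b x ∈ K) : K.starProjection * b = b := by
  ext x
  exact Submodule.starProjection_eq_self_iff.mpr (h x)

theorem commute_starProjection {K : Submodule ℂ H} [K.HasOrthogonalProjection] {t : H →L[ℂ] H}
    (h : ∀ x ∈ K, t x ∈ K) (h' : ∀ x ∈ K, star t x ∈ K) : Commute K.starProjection t := by
  have hinv : ∀ s : H →L[ℂ] H, (∀ x ∈ K, s x ∈ K) →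
      K.starProjection * s * K.starProjection = s * K.starProjection := fun s hs ↦ by
    rw [mul_assoc]
    exact starProjection_mul_eq_self fun x ↦ hs _ (K.starProjection_apply_mem x)
  exact commute_of_mul_mul_eq isStarProjection_starProjection.isSelfAdjoint (hinv t h) (hinv _ h')

omit [CompleteSpace H] in
theorem apply_mem_ker_of_commute {a t : H →L[ℂ] H} (h : Commute a t) {x : H} (hx : x ∈ a.ker) :
    t x ∈ a.ker := by
  have hx' : a x = 0 := hx
  have hax : a (t x) = t (a x) := congr($(h.eq) x)
  simpa [hx'] using hax

theorem exists_isStarProjection_mul_eq_posPart {a : H →L[ℂ] H} (ha : IsSelfAdjoint a) :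
    ∃ p, IsStarProjection p ∧ InBicommutant p a ∧ p * a = a⁺ := by
  have hp := isStarProjection_starProjection (U := (a⁻).ker)
  refine ⟨(a⁻).ker.starProjection, hp, fun t ht ↦ ?_, ?_⟩
  · exact commute_starProjection (fun _ ↦ apply_mem_ker_of_commute (ht.cfcₙ_real _))
      fun _ ↦ apply_mem_ker_of_commute
        ((commute_star_comm.mp (ha.star_eq.symm ▸ ht)).cfcₙ_real _)
  · have hzero : a⁻ * (a⁻).ker.starProjection = 0 := by
      ext x
      exact (a⁻).ker.starProjection_apply_mem x
    have hneg : (a⁻).ker.starProjection * a⁻ = 0 := by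
      simpa [hp.isSelfAdjoint.star_eq, (CFC.negPart_nonneg a).isSelfAdjoint.star_eq]
        using congr(star $hzero)
    calc (a⁻).ker.starProjection * a
        = (a⁻).ker.starProjection * (a⁺ - a⁻) := by rw [CFC.posPart_sub_negPart a]
      _ = a⁺ := by
        rw [mul_sub, hneg, sub_zero, starProjection_mul_eq_self
          fun x ↦ congr($(CFC.negPart_mul_posPart a) x)]

theorem norm_abs_sub_algebraMap_le {A : Type*} [CStarAlgebra A] [PartialOrder A]
    [StarOrderedRing A] {a : A} (ha : IsSelfAdjoint a) :
    ‖CFC.abs a - algebraMap ℝ A (‖a‖ / 2)‖ ≤ ‖a‖ / 2 := by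
  nontriviality A
  rw [CFC.abs_eq_cfc_norm a, ← cfc_const (‖a‖ / 2) a, ← cfc_sub (‖·‖) _ a]
  refine norm_cfc_le (by positivity) fun t ht ↦ ?_
  have hta : ‖t‖ ≤ ‖a‖ := spectrum.norm_le_norm_of_mem ht
  rw [Real.norm_eq_abs, abs_le]
  constructor <;> linarith [norm_nonneg t]

theorem exists_norm_sub_smul_le {a : H →L[ℂ] H} (ha : IsSelfAdjoint a) :
    ∃ p, IsStarProjection p ∧ InBicommutant p a ∧
      ‖a - (‖a‖ / 2) • (2 * p - 1)‖ ≤ ‖a‖ / 2 := by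
  obtain ⟨p, hp, hpa, hpos⟩ := exists_isStarProjection_mul_eq_posPart ha
  have hu := hp.two_mul_sub_one_mem_unitary
  have hsq : (2 * p - 1) * (2 * p - 1) = 1 := by
    rw [show (2 * p - 1) * (2 * p - 1) = 4 * (p * p - p) + 1 by noncomm_ring,
      hp.isIdempotentElem.eq, sub_self, mul_zero, zero_add]
  have habs : (2 * p - 1) * a = CFC.abs a := by
    rw [sub_mul, mul_assoc, hpos, one_mul, sub_eq_iff_eq_add, CFC.abs_add_self a, two_nsmul,
      two_mul]
  have hfactor : a - (‖a‖ / 2) • (2 * p - 1) =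
      (2 * p - 1) * (CFC.abs a - algebraMap ℝ _ (‖a‖ / 2)) := by
    rw [← habs, mul_sub, ← mul_assoc, hsq, one_mul, Algebra.algebraMap_eq_smul_one, mul_smul_comm,
      mul_one]
  refine ⟨p, hp, hpa, ?_⟩
  rw [hfactor, CStarRing.norm_mem_unitary_mul _ hu]
  exact norm_abs_sub_algebraMap_le ha

theorem norm_mul_sub_mul_le {a b : H →L[ℂ] H} (ha : IsSelfAdjoint a)
    (h : ∀ p, IsStarProjection p → InBicommutant p a → Commute p b) (n : ℕ) :
    ‖a * b - b * a‖ ≤ 2 * ‖a‖ * ‖b‖ * (1 / 2) ^ n := by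
  induction n generalizing a with
  | zero =>
    calc ‖a * b - b * a‖ ≤ ‖a * b‖ + ‖b * a‖ := norm_sub_le _ _
      _ ≤ ‖a‖ * ‖b‖ + ‖b‖ * ‖a‖ := add_le_add (norm_mul_le a b) (norm_mul_le b a)
      _ = 2 * ‖a‖ * ‖b‖ * (1 / 2) ^ 0 := by ring
  | succ n ih =>
    -- Replacing `a` by `a - u` keeps its commutator with `b` and halves its norm.
    obtain ⟨p, hp, hpa, hle⟩ := exists_norm_sub_smul_le ha
    set u := (‖a‖ / 2) • (2 * p - 1)
    have hu_comm : ∀ t, Commute p t → Commute u t := fun t ht ↦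
      (((Commute.ofNat_left 2 t).mul_left ht).sub_left (.one_left t)).smul_left _
    have hcomm : (a - u) * b - b * (a - u) = a * b - b * a := by
      rw [sub_mul, mul_sub, (hu_comm b (h p hp hpa)).eq, sub_sub_sub_cancel_right]
    have hc_adj : IsSelfAdjoint (a - u) :=
      ha.sub (.smul (.all _) (by simp [IsSelfAdjoint, hp.isSelfAdjoint.star_eq, two_mul]))
    have hca : InBicommutant (a - u) a := fun t ht ↦ ht.sub_left (hu_comm t (hpa t ht))
    calc ‖a * b - b * a‖ = ‖(a - u) * b - b * (a - u)‖ := by rw [hcomm]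
      _ ≤ 2 * ‖a - u‖ * ‖b‖ * (1 / 2) ^ n :=
        ih hc_adj fun q hq hqc ↦ h q hq fun t ht ↦ hqc t (hca t ht)
      _ ≤ 2 * (‖a‖ / 2) * ‖b‖ * (1 / 2) ^ n := by gcongr
      _ = 2 * ‖a‖ * ‖b‖ * (1 / 2) ^ (n + 1) := by ring

theorem commute_of_isSelfAdjoint_of_forall_isStarProjection {a b : H →L[ℂ] H}
    (ha : IsSelfAdjoint a)
    (h : ∀ p, IsStarProjection p → InBicommutant p a → Commute p b) : Commute a b := by
  have hlim : Filter.Tendsto (fun n : ℕ ↦ 2 * ‖a‖ * ‖b‖ * (1 / 2 : ℝ) ^ n) Filter.atTop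
      (nhds 0) := by
    simpa using (tendsto_pow_atTop_nhds_zero_of_lt_one (r := (1 / 2 : ℝ)) (by norm_num)
      (by norm_num)).const_mul (2 * ‖a‖ * ‖b‖)
  have hzero : ‖a * b - b * a‖ ≤ 0 := ge_of_tendsto' hlim (norm_mul_sub_mul_le ha h)
  simpa [sub_eq_zero] using! hzero

open scoped ComplexStarModule in
theorem commute_of_forall_isStarProjection {a b : H →L[ℂ] H}
    (h : ∀ p, IsStarProjection p → (∀ t, Commute a t → Commute (star a) t → Commute p t) →
      Commute p b) : Commute a b := by
  have hpart : ∀ s, IsSelfAdjoint s → (∀ t, Commute a t → Commute (star a) t → Commute s t) →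
      Commute s b := fun s hs hsa ↦
    commute_of_isSelfAdjoint_of_forall_isStarProjection hs fun p hp hps ↦
      h p hp fun t ht ht' ↦ hps t (hsa t ht ht')
  have hre : Commute (ℜ a : H →L[ℂ] H) b := hpart _ (ℜ a).2 fun t ht ht' ↦ by
    rw [realPart_apply_coe]
    exact (ht.add_left ht').smul_left _
  have him : Commute (ℑ a : H →L[ℂ] H) b := hpart _ (ℑ a).2 fun t ht ht' ↦ by
    rw [imaginaryPart_apply_coe]
    exact ((ht.sub_left ht').smul_left _).smul_left _
  rw [← realPart_add_I_smul_imaginaryPart a]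
  exact hre.add_left (him.smul_left _)

theorem exists_isStarProjection_mul_mul_eq {a : H →L[ℂ] H} (ha : 0 ≤ a) (hne : a ≠ 0) :
    ∃ p r, IsStarProjection p ∧ IsSelfAdjoint r ∧ p ≠ 0 ∧ InBicommutant p a ∧
      InBicommutant r a ∧ r * p * a * r = p := by
  -- `p` is the spectral projection of `a` for `(‖a‖ / 2, ‖a‖]`, where `a` agrees with the
  -- invertible `c = max(a, ‖a‖ / 2)`, and `r = c ^ (-1 / 2)`.
  have hnorm : 0 < ‖a‖ := norm_pos_iff.mpr hne
  set l := algebraMap ℝ (H →L[ℂ] H) (‖a‖ / 2)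
  have hl : IsStrictlyPositive l := isStrictlyPositive_algebraMap (by positivity)
  have hal {t} (ht : Commute a t) : Commute (a - l) t := ht.sub_left (Algebra.commutes _ t)
  have hal_adj : IsSelfAdjoint (a - l) := ha.isSelfAdjoint.sub hl.isSelfAdjoint
  obtain ⟨p, hp, hpal, hpos⟩ := exists_isStarProjection_mul_eq_posPart hal_adj
  have hp_ne : p ≠ 0 := by
    rintro rfl
    have hle : a ≤ l := sub_nonpos.mp <| (CFC.posPart_eq_zero_iff (a - l)).mp <| by
      rw [← hpos, zero_mul]
    linarith [(CStarAlgebra.norm_le_iff_le_algebraMap a (by positivity) ha).mpr hle]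
  have hc : IsStrictlyPositive ((a - l)⁺ + l) := .nonneg_add (CFC.posPart_nonneg _) hl
  set c := (a - l)⁺ + l with hc_def
  have hpa : InBicommutant p a := fun t ht ↦ hpal t (hal ht)
  have hra : InBicommutant (c ^ (-(1 / 2) : ℝ)) a := fun t ht ↦
    (((hal ht).cfcₙ_real _).add_left (Algebra.commutes _ t)).cfc_nnreal _
  have hpr : Commute p (c ^ (-(1 / 2) : ℝ)) := hpa _ (hra a (.refl a)).symm
  have hpc : p * a = p * c := by
    rw [hc_def, ← hpos, mul_add, ← mul_assoc, hp.isIdempotentElem.eq, mul_sub, sub_add_cancel]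
  refine ⟨p, c ^ (-(1 / 2) : ℝ), hp, CFC.rpow_nonneg.isSelfAdjoint, hp_ne, hpa, hra, ?_⟩
  rw [mul_assoc _ p, hpc, ← mul_assoc, ← hpr.eq, mul_assoc p, mul_assoc p,
    CFC.conjugate_rpow_neg_one_half c, mul_one]

theorem exists_isPartialIsometry_mul_mul_star_mul_self {x : H →L[ℂ] H} (hx : x ≠ 0) :
    ∃ h, InBicommutant h (star x * x) ∧ IsPartialIsometry (x * h * (star x * x)) ∧
      x * h * (star x * x) ≠ 0 := by
  set a := star x * x with ha_def
  have ha : 0 ≤ a := star_mul_self_nonneg x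
  have ha_ne : a ≠ 0 := (CStarRing.star_mul_self_ne_zero_iff x).mpr hx
  obtain ⟨p, r, hp, hr, hp_ne, hpa, hra, hrar⟩ := exists_isStarProjection_mul_mul_eq ha ha_ne
  have hpr : Commute p r := hpa r (hra a (.refl a)).symm
  have hvp : x * (p * r ^ 3) * a = x * (r * p) := by
    calc x * (p * r ^ 3) * a = x * (r * (r * p) * (r * a)) := by
          simp only [pow_succ, pow_zero, one_mul, mul_assoc, hpr.left_comm]
      _ = x * (r * (r * p * a * r)) := by rw [(hra a (.refl a)).eq]; simp only [mul_assoc]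
      _ = x * (r * p) := by rw [hrar]
  have hsq : star (x * (r * p)) * (x * (r * p)) = p := by
    calc star (x * (r * p)) * (x * (r * p)) = p * r * a * (r * p) := by
          simp only [star_mul, hr.star_eq, hp.isSelfAdjoint.star_eq, ha_def, mul_assoc]
      _ = r * p * a * r * p := by simp only [hpr.eq, mul_assoc]
      _ = p := by rw [hrar, hp.isIdempotentElem.eq]
  refine ⟨p * r ^ 3, fun t ht ↦ (hpa t ht).mul_left ((hra t ht).pow_left 3), ?_, ?_⟩ <;> rw [hvp]
  · rw [IsPartialIsometry, mul_assoc, hsq]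
    simp only [mul_assoc, hp.isIdempotentElem.eq]
  · intro hzero
    exact hp_ne (by rw [← hsq, hzero, mul_zero])

theorem exists_isPartialIsometry_mul_eq_mul {M : VonNeumannAlgebra H} {x : M} (hx : x ≠ 0) :
    ∃ c d : M, IsPartialIsometry (x * c) ∧ x * c = d * x ∧ x * c ≠ 0 := by
  obtain ⟨h, hh, hv, hne⟩ :=
    exists_isPartialIsometry_mul_mul_star_mul_self (Subtype.coe_ne_coe.mpr hx)
  let k : M := ⟨h, hh.mem (star x * x).2⟩
  have hcoe : ((x * (k * (star x * x)) : M) : H →L[ℂ] H) = x * h * (star ↑x * x) :=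
    (mul_assoc _ _ _).symm
  refine ⟨k * (star x * x), x * k * star x, Subtype.ext ?_, by simp only [mul_assoc],
    fun hzero ↦ hne ?_⟩
  · exact hcoe ▸ hv
  · rw [← hcoe, hzero, ZeroMemClass.coe_zero]

end Bicommutant

section StrongSum

/-- `V` is the sum of the family `v` in the strong operator topology. -/
def IsStrongSum {ι : Type*} (v : ι → H →L[ℂ] H) (V : H →L[ℂ] H) : Prop :=
  ∀ x, HasSum (fun i ↦ v i x) (V x)

variable {ι : Type*} {v : ι → H →L[ℂ] H} {V : H →L[ℂ] H}

omit [CompleteSpace H] in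
theorem IsStrongSum.mul_eq_mul (hV : IsStrongSum v V) {a b : H →L[ℂ] H}
    (h : ∀ i, a * v i = v i * b) : a * V = V * b := by
  ext x
  have ha : HasSum (fun i ↦ a (v i x)) (a (V x)) := (hV x).mapL a
  exact (ha.congr_fun fun i ↦ congr($(h i) x).symm).unique (hV (b x))

theorem IsStrongSum.mem (hV : IsStrongSum v V) {M : VonNeumannAlgebra H} (h : ∀ i, v i ∈ M) :
    V ∈ M :=
  mem_of_forall_commutant_commute fun _ ht ↦
    (hV.mul_eq_mul fun i ↦ (commute_of_mem_of_mem_commutant (h i) ht).symm).symm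

theorem IsStrongSum.isStarOrthogonal_sub (hV : IsStrongSum v V)
    (h : Pairwise fun i j ↦ IsStarOrthogonal (v i) (v j)) (i : ι) :
    IsStarOrthogonal (v i) (V - v i) := by
  have hsum : ∀ x, star (v i) (V x) = star (v i) (v i x) := fun x ↦
    ((hV x).mapL (star (v i))).unique
      (hasSum_single i fun j hj ↦ congr($((h hj.symm).1) x))
  have hsum' : ∀ x, V (star (v i) x) = v i (star (v i) x) := fun x ↦
    (hV _).unique (hasSum_single i fun j hj ↦ congr($((h hj).2) x))
  have hright : (V - v i) * star (v i) = 0 := by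
    ext x
    simp [hsum']
  constructor
  · ext x
    simp [hsum]
  · simpa using congr(star $hright)

theorem IsStrongSum.isPartialIsometry (hV : IsStrongSum v V)
    (hv : ∀ i, IsPartialIsometry (v i))
    (h : Pairwise fun i j ↦ IsStarOrthogonal (v i) (v j)) : IsPartialIsometry V := by
  have hVv : ∀ i, V * star V * v i = v i * 1 := fun i ↦ by
    have hi := hV.isStarOrthogonal_sub h i
    have hstar : star V * v i = star (v i) * v i := by
      simpa [sub_mul, sub_eq_zero] using hi.symm.1
    rw [mul_assoc, hstar, ← (hv i).eq_mul_of_isStarOrthogonal_sub' hi, mul_one]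
  simpa [IsPartialIsometry] using hV.mul_eq_mul hVv

theorem summable_of_isStarOrthogonal (hv : ∀ i, IsPartialIsometry (v i))
    (h : Pairwise fun i j ↦ IsStarOrthogonal (v i) (v j)) (x : H) :
    Summable fun i ↦ v i x := by
  have horth : OrthogonalFamily ℂ (fun i ↦ (v i).range) fun i ↦ (v i).range.subtypeₗᵢ := by
    rintro i j hij ⟨_, y, rfl⟩ ⟨_, z, rfl⟩
    have hyz : star (v i) (v j z) = 0 := congr($((h hij).1) z)
    simpa [ContinuousLinearMap.star_eq_adjoint, ContinuousLinearMap.adjoint_inner_right]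
      using congr(inner ℂ y $hyz)
  refine (horth.summable_iff_norm_sq_summable fun i ↦ ⟨v i x, x, rfl⟩).mpr <|
    summable_of_sum_le (c := ‖x‖ ^ 2) (fun i ↦ by positivity) fun s ↦ ?_
  rw [← horth.norm_sum]
  have hle := (∑ i ∈ s, v i).le_of_opNorm_le (IsPartialIsometry.sum hv h s).norm_le_one x
  gcongr
  simpa using hle

theorem exists_isStrongSum (hv : ∀ i, IsPartialIsometry (v i))
    (h : Pairwise fun i j ↦ IsStarOrthogonal (v i) (v j)) : ∃ V, IsStrongSum v V := by
  have hsum := summable_of_isStarOrthogonal hv h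
  have hlim : Filter.Tendsto (fun (s : Finset ι) x ↦ (∑ i ∈ s, v i) x) Filter.atTop
      (nhds fun x ↦ ∑' i, v i x) :=
    tendsto_pi_nhds.mpr fun x ↦ by simpa using! (hsum x).hasSum
  have hbdd : Bornology.IsBounded (Set.range fun s : Finset ι ↦ ∑ i ∈ s, v i) :=
    isBounded_iff_forall_norm_le.mpr ⟨1, by
      rintro _ ⟨s, rfl⟩
      exact (IsPartialIsometry.sum hv h s).norm_le_one⟩
  exact ⟨.ofTendstoOfBoundedRange _ _ hlim hbdd, fun x ↦ (hsum x).hasSum⟩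

end StrongSum

section Maximal

theorem exists_maximal_pairwise {α : Type*} (q : α → Prop) (r : α → α → Prop) :
    ∃ S : Set α, (∀ v ∈ S, q v) ∧ S.Pairwise r ∧
      ∀ w, q w → (∀ v ∈ S, r v w ∧ r w v) → w ∈ S := by
  obtain ⟨S, hS⟩ := zorn_subset {S : Set α | (∀ v ∈ S, q v) ∧ S.Pairwise r} fun c hc hchain ↦
    ⟨⋃₀ c, ⟨fun v ⟨s, hs, hv⟩ ↦ (hc hs).1 v hv,
      (Set.pairwise_sUnion hchain.directedOn).mpr fun s hs ↦ (hc hs).2⟩,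
      fun s hs ↦ Set.subset_sUnion_of_mem hs⟩
  refine ⟨S, hS.prop.1, hS.prop.2, fun w hw hrw ↦ ?_⟩
  have hinsert : (∀ v ∈ insert w S, q v) ∧ (insert w S).Pairwise r :=
    ⟨Set.forall_mem_insert.mpr ⟨hw, hS.prop.1⟩,
      hS.prop.2.insert fun v hv _ ↦ (hrw v hv).symm⟩
  exact hS.le_of_ge hinsert (Set.subset_insert w S) (Set.mem_insert w S)

variable {M : VonNeumannAlgebra H}

theorem exists_sum_of_isStarOrthogonal {S : Set M} (hS : ∀ v ∈ S, IsPartialIsometry v)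
    (h : S.Pairwise IsStarOrthogonal) :
    ∃ V : M, IsPartialIsometry V ∧ (∀ v ∈ S, IsStarOrthogonal v (V - v)) ∧
      ∀ a b : M, (∀ v ∈ S, a * v = v * b) → a * V = V * b := by
  let f (v : S) : H →L[ℂ] H := (v : M)
  have hf : ∀ v, IsPartialIsometry (f v) := fun v ↦ congrArg Subtype.val (hS v v.2)
  have hforth : Pairwise fun v w ↦ IsStarOrthogonal (f v) (f w) := fun v w hvw ↦
    have hM := h v.2 w.2 (Subtype.coe_ne_coe.mpr hvw)
    ⟨congrArg Subtype.val hM.1, congrArg Subtype.val hM.2⟩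
  obtain ⟨V, hV⟩ := exists_isStrongSum hf hforth
  refine ⟨⟨V, hV.mem fun v ↦ (v : M).2⟩, Subtype.ext (hV.isPartialIsometry hf hforth),
    fun v hv ↦ ?_, fun a b hab ↦ Subtype.ext (hV.mul_eq_mul fun v ↦
      congrArg Subtype.val (hab v v.2))⟩
  have hVv := hV.isStarOrthogonal_sub hforth ⟨v, hv⟩
  exact ⟨Subtype.ext hVv.1, Subtype.ext hVv.2⟩

variable (M) in
theorem exists_maximal_partialIsometry_sq_eq_zero :
    ∃ V : M, IsPartialIsometry V ∧ V * V = 0 ∧ ∀ w : M, IsPartialIsometry w → w * w = 0 →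
      IsStarOrthogonal V w → V * w = 0 → w * V = 0 → w = 0 := by
  obtain ⟨S, hS, hpair, hmax⟩ := exists_maximal_pairwise
    (fun v : M ↦ IsPartialIsometry v ∧ v * v = 0) (fun v w ↦ IsStarOrthogonal v w ∧ v * w = 0)
  obtain ⟨V, hV, hsub, hmul⟩ := exists_sum_of_isStarOrthogonal (fun v hv ↦ (hS v hv).1)
    (hpair.mono' fun v w hvw ↦ hvw.1)
  have hmulV : ∀ v ∈ S, v * V = 0 := fun v hv ↦ by
    simpa using hmul v 0 fun w hw ↦ by
      rw [mul_zero]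
      obtain rfl | hne := eq_or_ne v w
      exacts [(hS v hv).2, (hpair hv hw hne).2]
  refine ⟨V, hV, by simpa using (hmul 0 V fun v hv ↦ by rw [zero_mul, hmulV v hv]).symm, ?_⟩
  intro w hw hww horth hVw hwV
  refine hw.eq_zero_of_isStarOrthogonal_sub (hsub w (hmax w ⟨hw, hww⟩ fun v hv ↦ ?_)) horth
  have hv_isom := (hS v hv).1
  have hvw : v * w = 0 := by
    rw [hv_isom.eq_mul_of_isStarOrthogonal_sub (hsub v hv), mul_assoc, hVw, mul_zero]
  have hwv : w * v = 0 := by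
    rw [hv_isom.eq_mul_of_isStarOrthogonal_sub' (hsub v hv), ← mul_assoc, hwV, zero_mul]
  have hvw_orth := hv_isom.isStarOrthogonal_of_sub (hsub v hv) horth
  exact ⟨⟨hvw_orth, hvw⟩, hvw_orth.symm, hwv⟩

theorem exists_maximal_partialIsometry_between (e g : M) :
    ∃ W : M, IsPartialIsometry W ∧ e * W = W ∧ W * g = W ∧ ∀ w : M, IsPartialIsometry w →
      e * w = w → w * g = w → IsStarOrthogonal W w → w = 0 := by
  obtain ⟨S, hS, hpair, hmax⟩ := exists_maximal_pairwise
    (fun v : M ↦ IsPartialIsometry v ∧ e * v = v ∧ v * g = v) IsStarOrthogonal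
  obtain ⟨W, hW, hsub, hmul⟩ := exists_sum_of_isStarOrthogonal (fun v hv ↦ (hS v hv).1) hpair
  refine ⟨W, hW, by simpa using hmul e 1 fun v hv ↦ by rw [(hS v hv).2.1, mul_one],
    by simpa using (hmul 1 g fun v hv ↦ by rw [(hS v hv).2.2, one_mul]).symm, ?_⟩
  intro w hw hew hwg horth
  have hwS : w ∈ S := hmax w ⟨hw, hew, hwg⟩ fun v hv ↦
    have hvw := (hS v hv).1.isStarOrthogonal_of_sub (hsub v hv) horth
    ⟨hvw, hvw.symm⟩
  exact hw.eq_zero_of_isStarOrthogonal_sub (hsub w hwS) horth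

end Maximal

section Structure

/-- A projection `g` is abelian when the corner `g R g` is commutative. -/
def IsAbelianProjection {R : Type*} [Mul R] [Star R] (g : R) : Prop :=
  IsStarProjection g ∧ ∀ x y, Commute (g * x * g) (g * y * g)

variable {M : VonNeumannAlgebra H}

theorem commute_of_mul_one_sub_eq_zero {R : Type*} [Ring R] {p b : R} (h : p * b * (1 - p) = 0)
    (h' : (1 - p) * b * p = 0) : Commute p b := by
  have hpb : p * b = p * b * p := by rwa [mul_sub, mul_one, sub_eq_zero] at h
  have hbp : b * p = p * b * p := by
    rwa [sub_mul, one_mul, sub_mul, sub_eq_zero] at h'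
  exact hpb.trans hbp.symm

theorem isAbelianProjection_of_forall_sq_eq_zero {g : M} (hg : IsStarProjection g)
    (h : ∀ x, g * x = x → x * g = x → x * x = 0 → x = 0) : IsAbelianProjection g := by
  refine ⟨hg, fun x y ↦ Subtype.ext ?_⟩
  refine commute_of_forall_isStarProjection fun p hp hpa ↦ ?_
  have hpM : p ∈ M := mem_of_forall_commutant_commute fun t ht ↦
    hpa t (commute_of_mem_of_mem_commutant (g * x * g).2 ht)
      (commute_of_mem_of_mem_commutant (star (g * x * g)).2 ht)
  lift p to M using hpM
  have hgg : g * g = g := hg.isIdempotentElem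
  have hcorner_comm : ∀ z, g * z * g * g = g * (g * z * g) := fun z ↦ by
    rw [mul_assoc _ g g, hgg, ← mul_assoc, ← mul_assoc, hgg]
  have hpg : Commute p g := Subtype.ext <| hpa g (congrArg Subtype.val (hcorner_comm x)) <| by
    have hstar : star (g * x * g) = g * star x * g := by
      simp only [star_mul, hg.isSelfAdjoint.star_eq, mul_assoc]
    exact congrArg Subtype.val (hstar ▸ hcorner_comm (star x))
  have hp' : p * p = p := Subtype.ext hp.isIdempotentElem
  have hcorner : ∀ q r : M, Commute q g → Commute r g → r * q = 0 →
      q * (g * y * g) * r = 0 := fun q r hq hr hrq ↦ by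
    apply h
    · rw [← mul_assoc, ← mul_assoc, ← hq.eq, mul_assoc q, ← hcorner_comm, mul_assoc _ g g, hgg]
    · rw [mul_assoc, hr.eq, ← mul_assoc, mul_assoc q, hcorner_comm, ← mul_assoc g, ← mul_assoc g,
        hgg]
    · rw [mul_assoc, ← mul_assoc r, ← mul_assoc r, hrq, zero_mul, zero_mul, mul_zero]
  have hq : Commute (1 - p) g := .sub_left (.one_left g) hpg
  exact congrArg Subtype.val <| (commute_of_mul_one_sub_eq_zero
    (hcorner p (1 - p) hpg hq (by rw [sub_mul, one_mul, hp', sub_self]))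
    (hcorner (1 - p) p hq hpg (by rw [mul_sub, mul_one, hp', sub_self]))).eq

theorem exists_sq_eq_zero_isAbelianProjection (M : VonNeumannAlgebra H) :
    ∃ V : M, IsPartialIsometry V ∧ V * V = 0 ∧
      IsAbelianProjection (1 - (star V * V + V * star V)) := by
  obtain ⟨V, hV, hVV, hmax⟩ := exists_maximal_partialIsometry_sq_eq_zero M
  have hg : IsStarProjection (1 - (star V * V + V * star V)) :=
    (hV.isStarProjection_star_mul_self.add hV.isStarProjection_mul_star_self (by
      rw [mul_assoc, ← mul_assoc V, hVV, zero_mul, mul_zero])).one_sub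
  refine ⟨V, hV, hVV, isAbelianProjection_of_forall_sq_eq_zero hg fun x hgx hxg hxx ↦ ?_⟩
  set g := 1 - (star V * V + V * star V) with hg_def
  have hgV : g * V = 0 := by
    rw [hg_def, sub_mul, add_mul, mul_assoc _ V V, hVV, hV, mul_zero, zero_add, one_mul, sub_self]
  have hVg : V * g = 0 := by
    rw [hg_def, mul_sub, mul_add, ← mul_assoc V V, hVV, ← mul_assoc, hV, zero_mul, add_zero,
      mul_one, sub_self]
  by_contra hx
  obtain ⟨c, d, hv, hcd, hne⟩ := exists_isPartialIsometry_mul_eq_mul hx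
  have horth : IsStarOrthogonal V x := by
    constructor
    · rw [← hgx, ← mul_assoc, ← hg.isSelfAdjoint.star_eq, ← star_mul, hgV, star_zero, zero_mul]
    · rw [← hxg, star_mul, hg.isSelfAdjoint.star_eq, ← mul_assoc, hVg, zero_mul]
  refine hne (hmax (x * c) hv ?_ (horth.mul_right hcd) ?_ ?_)
  · nth_rw 1 [hcd]
    rw [mul_assoc, ← mul_assoc x, hxx, zero_mul, mul_zero]
  · rw [← hgx, mul_assoc, ← mul_assoc, hVg, zero_mul]
  · rw [hcd, ← hxg, mul_assoc, mul_assoc, hgV, mul_zero, mul_zero]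

theorem exists_isPartialIsometry_mul_mul_eq_zero {e g : M} (he : IsStarProjection e)
    (hg : IsStarProjection g) :
    ∃ W : M, IsPartialIsometry W ∧ e * W = W ∧ W * g = W ∧
      ∀ m, (e - W * star W) * m * (g - star W * W) = 0 := by
  obtain ⟨W, hW, heW, hWg, hmax⟩ := exists_maximal_partialIsometry_between e g
  refine ⟨W, hW, heW, hWg, fun m ↦ ?_⟩
  set x := (e - W * star W) * m * (g - star W * W) with hx_def
  have hex : e * x = x := by
    rw [hx_def, ← mul_assoc, ← mul_assoc, mul_sub e, he.isIdempotentElem.eq, ← mul_assoc, heW]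
  have hxg : x * g = x := by
    rw [hx_def, mul_assoc _ _ g, sub_mul g, hg.isIdempotentElem.eq, mul_assoc (star W), hWg]
  have horth : IsStarOrthogonal W x := by
    have hWe : star W * (e - W * star W) = 0 := by
      have hWe' : star W * e = star W := by
        simpa [he.isSelfAdjoint.star_eq] using congr(star $heW)
      have hW' : star W * W * star W = star W := by simpa [IsPartialIsometry] using hW.star
      rw [mul_sub, hWe', ← mul_assoc, hW', sub_self]
    have hWg' : W * star (g - star W * W) = 0 := by
      rw [star_sub, hg.isSelfAdjoint.star_eq, star_mul, star_star, mul_sub, hWg, ← mul_assoc, hW,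
        sub_self]
    constructor
    · rw [hx_def, ← mul_assoc, ← mul_assoc, hWe, zero_mul, zero_mul]
    · rw [hx_def, star_mul, ← mul_assoc, hWg', zero_mul]
  by_contra hx
  obtain ⟨c, d, hv, hcd, hne⟩ := exists_isPartialIsometry_mul_eq_mul hx
  refine hne (hmax _ hv ?_ ?_ (horth.mul_right hcd))
  · rw [← mul_assoc, hex]
  · rw [hcd, mul_assoc, hxg]

theorem exists_centralProjection_mul_eq_self (g : M) :
    ∃ Z : M, VNCentralProjection M Z ∧ g * Z = g ∧ ∀ x, (∀ m, g * m * x = 0) → Z * x = 0 := by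
  let K : Submodule ℂ H := ⨅ m : M, ((g * m : M) : H →L[ℂ] H).ker
  have hK : ∀ x, x ∈ K ↔ ∀ m : M, ((g * m : M) : H →L[ℂ] H) x = 0 :=
    fun x ↦ Submodule.mem_iInf _
  have hK_closed : IsClosed (K : Set H) := by
    rw [Submodule.coe_iInf]
    exact isClosed_iInter fun m ↦ ContinuousLinearMap.isClosed_ker _
  have : CompleteSpace K := hK_closed.completeSpace_coe
  have hK_commutant : ∀ t ∈ M.commutant, ∀ x ∈ K, t x ∈ K := fun t ht x hx ↦
    (hK _).mpr fun m ↦ apply_mem_ker_of_commute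
      (commute_of_mem_of_mem_commutant (g * m).2 ht) ((hK x).mp hx m)
  have hK_mem : ∀ t ∈ M, ∀ x ∈ K, t x ∈ K := fun t ht x hx ↦
    (hK _).mpr fun m ↦ by simpa [mul_assoc] using (hK x).mp hx (m * ⟨t, ht⟩)
  have hQ : IsStarProjection K.starProjection := isStarProjection_starProjection
  have hQM : K.starProjection ∈ M := mem_of_forall_commutant_commute fun t ht ↦
    commute_starProjection (hK_commutant t ht) (hK_commutant _ (star_mem ht))
  have hZ : VNCentralProjection M (1 - K.starProjection) :=
    ⟨⟨sub_mem (one_mem M) hQM, hQ.one_sub.isSelfAdjoint, hQ.one_sub.isIdempotentElem⟩,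
      fun t ht ↦ (Commute.one_left t).sub_left
        (commute_starProjection (hK_mem t ht) (hK_mem _ (star_mem ht)))⟩
  refine ⟨⟨_, hZ.1.1⟩, hZ, Subtype.ext ?_, fun x hx ↦ Subtype.ext ?_⟩
  · have hgQ : (g : H →L[ℂ] H) * K.starProjection = 0 := by
      ext x
      simpa using (hK _).mp (K.starProjection_apply_mem x) 1
    simp [mul_sub, hgQ]
  · have hxK : K.starProjection * x = x := starProjection_mul_eq_self fun y ↦
      (hK _).mpr fun m ↦ congr(($(hx m) : H →L[ℂ] H) y)
    simp [sub_mul, hxK]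

theorem VNCentralProjection.commute {Z : M} (hZ : VNCentralProjection M Z) (x : M) :
    Commute Z x :=
  Subtype.ext (hZ.2 x x.2)

theorem VNCentralProjection.eq_zero_of_mul_eq_self {Z g : M} (hZ : VNCentralProjection M Z)
    (hM : VNNoTypeI1 M) (hg : IsAbelianProjection g) (hZg : Z * g = Z) : Z = 0 := by
  have hZ_sq : Z * Z = Z := Subtype.ext hZ.1.2.2
  have hcorner : ∀ a, g * (Z * a) * g = Z * a := fun a ↦ by
    rw [← mul_assoc, ← (hZ.commute g).eq, hZg, (hZ.commute a).eq, mul_assoc, hZg]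
  have hcomm : ∀ a b, Z * (a * b) = Z * (b * a) := fun a b ↦ by
    have hprod : ∀ x y, Z * (x * y) = Z * x * (Z * y) := fun x y ↦ by
      rw [(hZ.commute x).eq, mul_assoc, ← mul_assoc Z Z, hZ_sq, ← mul_assoc, ← mul_assoc,
        (hZ.commute x).eq]
    have hab := hg.2 (Z * a) (Z * b)
    rw [hcorner, hcorner] at hab
    rw [hprod, hab.eq, hprod]
  by_contra hne
  obtain ⟨a, ha, b, hb, hab⟩ := hM Z hZ (by simpa using hne)
  refine hab ?_
  rw [mul_sub, sub_eq_zero]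
  exact congrArg Subtype.val (hcomm ⟨a, ha⟩ ⟨b, hb⟩)

theorem IsAbelianProjection.mul_mul_eq_zero {R : Type*} [Ring R] [StarRing R] {g W : R}
    (hg : IsAbelianProjection g) (hW : IsPartialIsometry W) (hgW : g * W = W) (m : R) :
    (g - W * star W) * m * (star W * W) = 0 := by
  have hgg : g * g = g := hg.1.isIdempotentElem
  have hWg : star W * g = star W := by
    simpa [hg.1.isSelfAdjoint.star_eq] using congr(star $hgW)
  set g₀ := g - W * star W with hg₀
  have hgg₀ : g * g₀ = g₀ := by rw [hg₀, mul_sub, hgg, ← mul_assoc, hgW]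
  have hg₀g : g₀ * g = g₀ := by rw [hg₀, sub_mul, hgg, mul_assoc, hWg]
  have hg₀W : g₀ * W = 0 := by rw [hg₀, sub_mul, hgW, hW, sub_self]
  have hcomm : Commute g₀ (g * (m * star W) * g) := by
    simpa only [hgg₀, hg₀g] using hg.2 g₀ (m * star W)
  calc g₀ * m * (star W * W) = g₀ * (g * (m * star W) * g) * W := by
        simp only [← mul_assoc, hg₀g]
        rw [mul_assoc _ (star W) g, hWg]
    _ = g * (m * star W) * g * (g₀ * W) := by rw [hcomm.eq, mul_assoc]
    _ = 0 := by rw [hg₀W, mul_zero]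

theorem IsAbelianProjection.exists_mul_star_self_eq {g : M} (hg : IsAbelianProjection g)
    (hM : VNNoTypeI1 M) : ∃ W : M, g * W = W ∧ W * g = 0 ∧ W * star W = g := by
  obtain ⟨W, hW, hgW, hWg, hzero⟩ := exists_isPartialIsometry_mul_mul_eq_zero hg.1 hg.1.one_sub
  have hcomp : ∀ m, (g - W * star W) * m * (1 - g) = 0 := fun m ↦ by
    rw [← sub_add_cancel (1 - g) (star W * W), mul_add, hzero, hg.mul_mul_eq_zero hW hgW, add_zero]
  obtain ⟨Z, hZ, hgZ, hcarrier⟩ := exists_centralProjection_mul_eq_self (g - W * star W)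
  have hZg : Z * g = Z := by
    simpa [mul_sub, sub_eq_zero, eq_comm] using hcarrier (1 - g) hcomp
  rw [hZ.eq_zero_of_mul_eq_self hM hg hZg, mul_zero, eq_comm, sub_eq_zero] at hgZ
  exact ⟨W, hgW, by simpa [mul_sub] using hWg, hgZ.symm⟩

end Structure

section CommutatorIdeal

/-- The two-sided ideal generated by the additive commutators of a ring. -/
def commutatorIdeal (R : Type*) [Ring R] : TwoSidedIdeal R :=
  TwoSidedIdeal.span {x | ∃ a b, x = a * b - b * a}

theorem mem_commutatorIdeal_of_mul_eq_self_of_mul_eq_zero {R : Type*} [Ring R] {e x : R}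
    (hex : e * x = x) (hxe : x * e = 0) : x ∈ commutatorIdeal R :=
  TwoSidedIdeal.subset_span ⟨e, x, by rw [hex, hxe, sub_zero]⟩

end CommutatorIdeal

/-- **Lemma 2.1 (ii).** A von Neumann algebra with no central summands of type I₁
equals the two-sided ideal generated by all its commutators. -/
theorem ideal_generated_by_commutators_eq_top (M : VonNeumannAlgebra H)
    (hM : VNNoTypeI1 M) :
    TwoSidedIdeal.span {x : M | ∃ a b : M, x = a * b - b * a} = ⊤ := by
  change commutatorIdeal M = ⊤
  obtain ⟨V, hV, hVV, hg⟩ := exists_sq_eq_zero_isAbelianProjection M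
  obtain ⟨W, hgW, hWg, hWW⟩ := hg.exists_mul_star_self_eq hM
  have hV_mem : V ∈ commutatorIdeal M :=
    mem_commutatorIdeal_of_mul_eq_self_of_mul_eq_zero hV
      (by rw [← mul_assoc, hVV, zero_mul])
  have hW_mem : W ∈ commutatorIdeal M := mem_commutatorIdeal_of_mul_eq_self_of_mul_eq_zero hgW hWg
  have hone : 1 = star V * V + V * star V + W * star W := by rw [hWW, add_sub_cancel]
  rw [← TwoSidedIdeal.one_mem_iff, hone]
  exact add_mem (add_mem (TwoSidedIdeal.mul_mem_left _ _ _ hV_mem)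
    (TwoSidedIdeal.mul_mem_right _ _ _ hV_mem)) (TwoSidedIdeal.mul_mem_right _ _ _ hW_mem)
end
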